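/- Under the MS-LS model with α_i + α_j = α for all pairs i, j, the first factorial moment of the nodal strength of a node within state k satisfies G̃_k′(1) = E[Y_t | s_t = k] = (N−1) e^α (4σ_k²β + 1)^{−d/2}, where G̃_k is the conditional probability generating function of the nodal strength given s_t = k. -/

import Mathlib

open MeasureTheory ProbabilityTheory Real

noncomputable section

/-- Density of the centered isotropic Gaussian `N(0, σ² I_d)` on `ℝ^d`. -/
def gaussPdf (d : ℕ) (σ2 : ℝ) (x : EuclideanSpace ℝ (Fin d)) : ℝ :=
  (2 * Real.pi * σ2) ^ (-(d : ℝ) / 2) * Real.exp (-‖x‖ ^ 2 / (2 * σ2))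

/-- The centered isotropic Gaussian measure `N(0, σ² I_d)` on `ℝ^d`. -/
def gaussMeasure (d : ℕ) (σ2 : ℝ) : Measure (EuclideanSpace ℝ (Fin d)) :=
  volume.withDensity fun x => ENNReal.ofReal (gaussPdf d σ2 x)

/-- Unordered pairs of distinct nodes, represented as ordered pairs `(i, j)` with `i < j`. -/
abbrev Pairs (N : ℕ) : Type := {p : Fin N × Fin N // p.1 < p.2}

/-- Joint law of the latent positions `(Z_i)_{i}` (i.i.d. `N(0, σ² I_d)`) and of the
edge weights `(Y_{ij})_{i<j}`, which given the latent positions are conditionally independent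
Poisson variables with intensity `exp (α_i + α_j - β ‖Z_i - Z_j‖²)`. -/
def jointLaw (d N : ℕ) (β : ℝ) (α : Fin N → ℝ) (σ2 : ℝ) :
    Measure ((Fin N → EuclideanSpace ℝ (Fin d)) × (Pairs N → ℕ)) :=
  (volume.withDensity fun z : Fin N → EuclideanSpace ℝ (Fin d) =>
      ENNReal.ofReal (∏ i, gaussPdf d σ2 (z i))).bind fun z =>
    (Measure.pi fun p : Pairs N =>
        poissonMeasure
          (Real.exp (α p.1.1 + α p.1.2 - β * ‖z p.1.1 - z p.1.2‖ ^ 2)).toNNReal).map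
      fun y => (z, y)

/-- The Markov-switching latent space (MS-LS) network model: a hidden `K`-state Markov chain
`s`, state-dependent i.i.d. Gaussian latent positions `Z`, and symmetric edge weights `Y`
that conditionally on the current state (and given the latent positions) are independent
Poisson variables with log-intensity `α i + α j - β ‖Z i k - Z j k‖²`. -/
structure MSLS (Ω : Type) [MeasurableSpace Ω] where
  /-- the underlying probability measure -/
  P : Measure Ω
  isProb : IsProbabilityMeasure P
  /-- the dimension of the latent space -/
  d : ℕ
  /-- the number of nodes -/
  N : ℕ
  /-- the number of states of the hidden Markov chain -/
  K : ℕ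
  β : ℝ
  β_pos : 0 < β
  /-- individual effects -/
  α : Fin N → ℝ
  /-- state-specific variances of the latent positions -/
  σ2 : Fin K → ℝ
  σ2_pos : ∀ k, 0 < σ2 k
  /-- transition probabilities of the hidden Markov chain -/
  q : Fin K → Fin K → ℝ
  q_nonneg : ∀ l k, 0 ≤ q l k
  q_sum : ∀ l, ∑ k, q l k = 1
  /-- the hidden Markov chain -/
  s : ℕ → Ω → Fin K
  s_meas : ∀ t, Measurable (s t)
  /-- the latent positions in each state -/
  Z : Fin N → Fin K → Ω → EuclideanSpace ℝ (Fin d)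
  Z_meas : ∀ i k, Measurable (Z i k)
  /-- the edge weights -/
  Y : Fin N → Fin N → ℕ → Ω → ℕ
  Y_meas : ∀ i j t, Measurable (Y i j t)
  Y_symm : ∀ i j t ω, Y i j t ω = Y j i t ω
  state_pos : ∀ t k, P {ω | s t ω = k} ≠ 0
  /-- Markov transition probabilities -/
  trans_prob : ∀ t l k, ((P[|{ω | s t ω = l}]) {ω | s (t + 1) ω = k}).toReal = q l k
  /-- conditionally on the current state, the latent positions and the edge weights follow
  the Poisson latent space law -/
  cond_law_state : ∀ t k,
    (P[|{ω | s t ω = k}]).map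
        (fun ω => ((fun i => Z i k ω), fun p : Pairs N => Y p.1.1 p.1.2 t ω)) =
      jointLaw d N β α (σ2 k)
  /-- conditionally on the previous and current state, the latent positions and the edge
  weights follow the Poisson latent space law of the current state -/
  cond_law_pair : ∀ t l k, q l k ≠ 0 →
    (P[|{ω | s t ω = l} ∩ {ω | s (t + 1) ω = k}]).map
        (fun ω => ((fun i => Z i k ω), fun p : Pairs N => Y p.1.1 p.1.2 (t + 1) ω)) =
      jointLaw d N β α (σ2 k)

attribute [instance] MSLS.isProb

/-- The nodal strength `Y_{it} = Σ_{j ≠ i} Y_{ijt}` of node `i` at time `t`. -/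
def MSLS.strength {Ω : Type} [MeasurableSpace Ω] (M : MSLS Ω) (i : Fin M.N) (t : ℕ)
    (ω : Ω) : ℕ :=
  ∑ j ∈ Finset.univ.erase i, M.Y i j t ω

end

/-- The mean of a Poisson distribution is its rate. -/
lemma lintegral_natCast_poissonMeasure (r : NNReal) :
    ∫⁻ n, (n : ENNReal) ∂(poissonMeasure r) = r := by
  have h1 : ∫⁻ _ : ℕ, (1 : ENNReal) ∂(poissonMeasure r) = 1 := by simp
  rw [poissonMeasure, lintegral_sum_measure] at h1 ⊢
  simp only [lintegral_smul_measure, lintegral_dirac, smul_eq_mul, mul_one] at h1 ⊢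
  rw [tsum_eq_zero_add' ENNReal.summable]
  have h (n : ℕ) : ENNReal.ofReal (exp (-r) * r ^ (n + 1) / (n + 1).factorial) *
      ((n + 1 : ℕ) : ENNReal) = r * ENNReal.ofReal (exp (-r) * r ^ n / n.factorial) := by
    rw [← ENNReal.ofReal_natCast, ← ENNReal.ofReal_coe_nnreal,
      ← ENNReal.ofReal_mul (by positivity), ← ENNReal.ofReal_mul (by positivity)]
    congr 1
    rw [Nat.factorial_succ]
    push_cast
    field_simp
    ring
  simp only [h, ENNReal.tsum_mul_left, h1]
  simp

lemma lintegral_exp_neg_mul_sq_norm (d : ℕ) {b : ℝ} (hb : 0 < b) :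
    ∫⁻ x : EuclideanSpace ℝ (Fin d), ENNReal.ofReal (exp (-b * ‖x‖ ^ 2)) =
      ENNReal.ofReal ((Real.pi / b) ^ ((d : ℝ) / 2)) := by
  have h := GaussianFourier.integral_rexp_neg_mul_sq_norm (V := EuclideanSpace ℝ (Fin d)) hb
  rw [finrank_euclideanSpace_fin] at h
  rw [← h, ofReal_integral_eq_lintegral_ofReal]
  · refine Integrable.of_integral_ne_zero ?_
    rw [h]
    positivity
  · exact ae_of_all _ fun x => (exp_pos _).le

lemma gaussPdf_nonneg (d : ℕ) {σ2 : ℝ} (hσ : 0 < σ2) (x : EuclideanSpace ℝ (Fin d)) :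
    0 ≤ gaussPdf d σ2 x := by
  unfold gaussPdf
  positivity

@[fun_prop]
lemma measurable_gaussPdf (d : ℕ) (σ2 : ℝ) : Measurable (gaussPdf d σ2) := by
  unfold gaussPdf
  fun_prop

lemma lintegral_gaussPdf (d : ℕ) {σ2 : ℝ} (hσ : 0 < σ2) :
    ∫⁻ x, ENNReal.ofReal (gaussPdf d σ2 x) = 1 := by
  have hc : 0 ≤ (2 * Real.pi * σ2) ^ (-(d : ℝ) / 2) := by positivity
  have h (x : EuclideanSpace ℝ (Fin d)) : -‖x‖ ^ 2 / (2 * σ2) = -(1 / (2 * σ2)) * ‖x‖ ^ 2 := by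
    ring
  simp only [gaussPdf, ENNReal.ofReal_mul hc, h]
  rw [lintegral_const_mul _ (by fun_prop), lintegral_exp_neg_mul_sq_norm d (by positivity),
    ← ENNReal.ofReal_mul hc, ← ENNReal.ofReal_one]
  congr 1
  rw [show Real.pi / (1 / (2 * σ2)) = 2 * Real.pi * σ2 by field_simp,
    ← rpow_add (by positivity)]
  ring_nf
  exact rpow_zero _

lemma isProbabilityMeasure_gaussMeasure (d : ℕ) {σ2 : ℝ} (hσ : 0 < σ2) :
    IsProbabilityMeasure (gaussMeasure d σ2) :=
  ⟨by rw [gaussMeasure, withDensity_apply _ .univ, setLIntegral_univ, lintegral_gaussPdf d hσ]⟩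

lemma integrable_gaussPdf (d : ℕ) {σ2 : ℝ} (hσ : 0 < σ2) : Integrable (gaussPdf d σ2) := by
  refine ⟨by fun_prop, ?_⟩
  rw [hasFiniteIntegral_iff_ofReal (ae_of_all _ (gaussPdf_nonneg d hσ)), lintegral_gaussPdf d hσ]
  exact ENNReal.one_lt_top

lemma withDensity_prod_gaussPdf (d N : ℕ) {σ2 : ℝ} (hσ : 0 < σ2) :
    (volume.withDensity fun z : Fin N → EuclideanSpace ℝ (Fin d) =>
      ENNReal.ofReal (∏ i, gaussPdf d σ2 (z i))) = Measure.pi fun _ => gaussMeasure d σ2 := by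
  have := isProbabilityMeasure_gaussMeasure d hσ
  refine (Measure.pi_eq fun s hs => ?_).symm
  rw [withDensity_apply _ (.univ_pi hs), volume_pi, Measure.restrict_pi_pi,
    ← ofReal_integral_eq_lintegral_ofReal, integral_fintype_prod_eq_prod,
    ENNReal.ofReal_prod_of_nonneg fun i _ => integral_nonneg (gaussPdf_nonneg d hσ)]
  · refine Finset.prod_congr rfl fun i _ => ?_
    rw [ofReal_integral_eq_lintegral_ofReal (integrable_gaussPdf d hσ).integrableOn
      (ae_of_all _ (gaussPdf_nonneg d hσ)), gaussMeasure, withDensity_apply _ (hs i)]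
  · exact Integrable.fintype_prod fun i => (integrable_gaussPdf d hσ).integrableOn
  · exact ae_of_all _ fun z => Finset.prod_nonneg fun i _ => gaussPdf_nonneg d hσ _

/-- Completion of the square in the exponent of `exp (-u ‖x‖² - u ‖y‖² - β ‖x - y‖²)`. -/
lemma completed_square {E : Type*} [NormedAddCommGroup E] [InnerProductSpace ℝ E] {u β : ℝ}
    (h : u + β ≠ 0) (x y : E) :
    -u * ‖x‖ ^ 2 - u * ‖y‖ ^ 2 - β * ‖x - y‖ ^ 2 =
      -(u * (u + 2 * β) / (u + β)) * ‖y‖ ^ 2 +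
        -(u + β) * ‖x - (β / (u + β)) • y‖ ^ 2 := by
  rw [norm_sub_sq_real, norm_sub_sq_real, inner_smul_right, norm_smul, mul_pow, norm_eq_abs,
    sq_abs]
  field_simp
  ring

lemma lintegral_exp_gaussMeasure_prod (d : ℕ) {σ2 β : ℝ} (hσ : 0 < σ2) (hβ : 0 < β) (a : ℝ) :
    ∫⁻ p, ENNReal.ofReal (exp (a - β * ‖p.1 - p.2‖ ^ 2))
        ∂((gaussMeasure d σ2).prod (gaussMeasure d σ2)) =
      ENNReal.ofReal (exp a * (4 * σ2 * β + 1) ^ (-(d : ℝ) / 2)) := by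
  have := isProbabilityMeasure_gaussMeasure d hσ
  set u : ℝ := 1 / (2 * σ2) with hu
  have hu0 : 0 < u := by positivity
  set c : ℝ := (2 * Real.pi * σ2) ^ (-(d : ℝ) / 2) with hc
  have hc0 : 0 < c := by positivity
  have key (x y : EuclideanSpace ℝ (Fin d)) :
      ENNReal.ofReal (gaussPdf d σ2 x) * ENNReal.ofReal (exp (a - β * ‖x - y‖ ^ 2)) *
        ENNReal.ofReal (gaussPdf d σ2 y) =
      ENNReal.ofReal (c * c * exp a) *
        ENNReal.ofReal (exp (-(u * (u + 2 * β) / (u + β)) * ‖y‖ ^ 2)) *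
        ENNReal.ofReal (exp (-(u + β) * ‖x - (β / (u + β)) • y‖ ^ 2)) := by
    rw [← ENNReal.ofReal_mul (gaussPdf_nonneg d hσ x),
      ← ENNReal.ofReal_mul (mul_nonneg (gaussPdf_nonneg d hσ x) (exp_pos _).le),
      ← ENNReal.ofReal_mul (by positivity), ← ENNReal.ofReal_mul (by positivity),
      mul_assoc (c * c * exp a), ← exp_add, ← completed_square (by positivity),
      mul_assoc (c * c), ← exp_add]
    congr 1
    simp only [gaussPdf, ← hc]
    rw [show a + (-u * ‖x‖ ^ 2 - u * ‖y‖ ^ 2 - β * ‖x - y‖ ^ 2) =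
      -‖x‖ ^ 2 / (2 * σ2) + (a - β * ‖x - y‖ ^ 2) + -‖y‖ ^ 2 / (2 * σ2) by rw [hu]; ring,
      exp_add, exp_add]
    ring
  rw [lintegral_prod_symm _ (by fun_prop)]
  conv_lhs =>
    enter [2, y]
    rw [gaussMeasure, lintegral_withDensity_eq_lintegral_mul₀ (by fun_prop) (by fun_prop)]
  conv_lhs => rw [gaussMeasure]
  rw [lintegral_withDensity_eq_lintegral_mul₀ (by fun_prop)
    (Measurable.aemeasurable (Measurable.lintegral_prod_left (by
      simp only [Pi.mul_apply]; fun_prop)))]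
  simp only [Pi.mul_apply]
  have inner (y : EuclideanSpace ℝ (Fin d)) :
      ENNReal.ofReal (gaussPdf d σ2 y) *
        ∫⁻ x, ENNReal.ofReal (gaussPdf d σ2 x) * ENNReal.ofReal (exp (a - β * ‖x - y‖ ^ 2)) =
      ENNReal.ofReal (c * c * exp a) * ENNReal.ofReal ((Real.pi / (u + β)) ^ ((d : ℝ) / 2)) *
        ENNReal.ofReal (exp (-(u * (u + 2 * β) / (u + β)) * ‖y‖ ^ 2)) := by
    rw [mul_comm, ← lintegral_mul_const _ (by fun_prop)]
    simp only [key]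
    rw [lintegral_const_mul _ (by fun_prop),
      lintegral_sub_right_eq_self
        (fun x : EuclideanSpace ℝ (Fin d) => ENNReal.ofReal (exp (-(u + β) * ‖x‖ ^ 2))),
      lintegral_exp_neg_mul_sq_norm d (by positivity)]
    ring
  simp only [inner]
  rw [lintegral_const_mul _ (by fun_prop), lintegral_exp_neg_mul_sq_norm d (by positivity),
    ← ENNReal.ofReal_mul (by positivity), ← ENNReal.ofReal_mul (by positivity)]
  congr 1
  have hpow : c * c * ((Real.pi / (u + β)) ^ ((d : ℝ) / 2) *
      (Real.pi / (u * (u + 2 * β) / (u + β))) ^ ((d : ℝ) / 2)) =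
      (4 * σ2 * β + 1) ^ (-(d : ℝ) / 2) := by
    rw [hc, neg_div, rpow_neg (by positivity), rpow_neg (by positivity), ← inv_rpow (by positivity),
      ← inv_rpow (by positivity), ← mul_rpow (by positivity) (by positivity),
      ← mul_rpow (by positivity) (by positivity), ← mul_rpow (by positivity) (by positivity)]
    congr 1
    rw [hu]
    field_simp
    ring
  rw [← hpow]
  ring

lemma lintegral_edge_jointLaw (d N : ℕ) {β σ2 a : ℝ} (hβ : 0 < β) (hσ : 0 < σ2) (α : Fin N → ℝ)
    (hα : ∀ i j, α i + α j = a) (hne : jointLaw d N β α σ2 ≠ 0) (p : Pairs N) :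
    ∫⁻ w, (w.2 p : ENNReal) ∂(jointLaw d N β α σ2) =
      ENNReal.ofReal (exp a * (4 * σ2 * β + 1) ^ (-(d : ℝ) / 2)) := by
  have := isProbabilityMeasure_gaussMeasure d hσ
  rw [jointLaw, withDensity_prod_gaussPdf d N hσ] at hne ⊢
  have hκ : AEMeasurable (fun z : Fin N → EuclideanSpace ℝ (Fin d) =>
      (Measure.pi fun p : Pairs N => poissonMeasure
        (exp (α p.1.1 + α p.1.2 - β * ‖z p.1.1 - z p.1.2‖ ^ 2)).toNNReal).map fun y => (z, y))
      (Measure.pi fun _ => gaussMeasure d σ2) := by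
    by_contra h
    exact hne (by rw [Measure.bind, Measure.map_of_not_aemeasurable h, Measure.join_zero])
  rw [Measure.lintegral_bind hκ (by fun_prop)]
  have hedge (z : Fin N → EuclideanSpace ℝ (Fin d)) :
      ∫⁻ w, (w.2 p : ENNReal) ∂((Measure.pi fun p : Pairs N => poissonMeasure
        (exp (α p.1.1 + α p.1.2 - β * ‖z p.1.1 - z p.1.2‖ ^ 2)).toNNReal).map
          fun y => (z, y)) =
      ENNReal.ofReal (exp (a - β * ‖z p.1.1 - z p.1.2‖ ^ 2)) := by
    have hmarg := (measurePreserving_eval (fun p : Pairs N => poissonMeasure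
      (exp (α p.1.1 + α p.1.2 - β * ‖z p.1.1 - z p.1.2‖ ^ 2)).toNNReal) p).lintegral_comp
        (f := fun n : ℕ => (n : ENNReal)) (by fun_prop)
    rw [lintegral_natCast_poissonMeasure, hα] at hmarg
    rw [lintegral_map (by fun_prop) (by fun_prop)]
    exact hmarg
  simp only [hedge]
  have hind : (Measure.pi fun _ : Fin N => gaussMeasure d σ2).map (fun z => (z p.1.1, z p.1.2)) =
      (gaussMeasure d σ2).prod (gaussMeasure d σ2) := by
    have h := (iIndepFun_pi (μ := fun _ : Fin N => gaussMeasure d σ2) (X := fun _ x => x)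
      (fun _ => aemeasurable_id)).indepFun p.2.ne
    rw [h.map_prod_eq_prod_map_map (measurable_pi_apply _).aemeasurable
      (measurable_pi_apply _).aemeasurable]
    congr 1
    · exact (measurePreserving_eval _ p.1.1).map_eq
    · exact (measurePreserving_eval _ p.1.2).map_eq
  rw [← lintegral_exp_gaussMeasure_prod d hσ hβ a, ← hind,
    lintegral_map (by fun_prop) (by fun_prop)]

lemma MSLS.lintegral_edge {Ω : Type} [MeasurableSpace Ω] (M : MSLS Ω) {a : ℝ}
    (hα : ∀ i j, M.α i + M.α j = a) {i j : Fin M.N} (hij : i ≠ j) (t : ℕ) (k : Fin M.K) :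
    ∫⁻ ω, (M.Y i j t ω : ENNReal) ∂(M.P[|{ω | M.s t ω = k}]) =
      ENNReal.ofReal (exp a * (4 * M.σ2 k * M.β + 1) ^ (-(M.d : ℝ) / 2)) := by
  wlog hlt : i < j generalizing i j
  · simp only [M.Y_symm i j]
    exact this hij.symm (lt_of_le_of_ne (not_lt.mp hlt) hij.symm)
  have := M.Z_meas
  have := M.Y_meas
  have hmeas : Measurable fun ω =>
      ((fun i => M.Z i k ω), fun p : Pairs M.N => M.Y p.1.1 p.1.2 t ω) := by fun_prop
  have := cond_isProbabilityMeasure (M.state_pos t k)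
  have hlaw := Measure.isProbabilityMeasure_map (μ := M.P[|{ω | M.s t ω = k}]) hmeas.aemeasurable
  rw [M.cond_law_state] at hlaw
  rw [← lintegral_edge_jointLaw M.d M.N M.β_pos (M.σ2_pos k) M.α hα
    (IsProbabilityMeasure.ne_zero _) ⟨(i, j), hlt⟩, ← M.cond_law_state t k,
    lintegral_map (by fun_prop) hmeas]

/-- Under the MS-LS model with `α_i + α_j = α` for all pairs, the first
factorial moment of the nodal strength within state `k` (i.e. `G̃_k'(1) = E[Y_t | s_t = k]`)
equals `(N - 1) e^α (4σ_k²β + 1)^{-d/2}`. -/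
theorem statement10 {Ω : Type} [MeasurableSpace Ω] (M : MSLS Ω) (a : ℝ)
    (hα : ∀ i j, M.α i + M.α j = a) (i : Fin M.N) (t : ℕ) (k : Fin M.K) :
    ∫ ω, (M.strength i t ω : ℝ) ∂(M.P[|{ω | M.s t ω = k}]) =
      ((M.N : ℝ) - 1) * Real.exp a * (4 * M.σ2 k * M.β + 1) ^ (-(M.d : ℝ) / 2) := by
  have := M.Y_meas
  have hstrength : Measurable (M.strength i t) := by
    unfold MSLS.strength
    fun_prop
  have hcast (ω : Ω) : (M.strength i t ω : ℝ) = ((M.strength i t ω : ENNReal)).toReal := by simp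
  simp only [hcast]
  rw [integral_toReal (by fun_prop) (ae_of_all _ fun ω => ENNReal.natCast_lt_top _)]
  simp only [MSLS.strength, Nat.cast_sum]
  rw [lintegral_finsetSum _ (by fun_prop),
    Finset.sum_congr rfl fun j hj => M.lintegral_edge hα (Finset.ne_of_mem_erase hj).symm t k]
  have hβ := M.β_pos
  have hσ := M.σ2_pos k
  rw [Finset.sum_const, Finset.card_erase_of_mem (Finset.mem_univ i), Finset.card_univ,
    Fintype.card_fin, nsmul_eq_mul, ENNReal.toReal_mul, ENNReal.toReal_ofReal (by positivity),
    ENNReal.toReal_natCast, Nat.cast_sub (Nat.one_le_of_lt i.pos), Nat.cast_one,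
    mul_assoc (_ - _)]
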